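/- For each n ∈ ℕ with n ≥ 1, the class of languages recognized by deterministic register set automata with at most n registers is not closed under intersection: there exist data-word languages L₁ and L₂, each recognized by a DRsA with at most n registers, such that L₁ ∩ L₂ is not recognized by any DRsA with at most n registers. -/

import Mathlib

/-- A data word over alphabet `Sigma`, with data domain `𝔻 = ℕ`. -/
abbrev DataWord (Sigma : Type) : Type :=
  List (Sigma × ℕ)
/-- A transition `(src, letter, gIn, gNin, upd, tgt)` of a register set automaton.
In the update, `none` stands for the current input value `in`, and `some r`
for register `r`. -/
structure RsATrans (Sigma : Type) where
  src : ℕ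
  letter : Sigma
  gIn : Finset ℕ
  gNin : Finset ℕ
  upd : ℕ → Finset (Option ℕ)
  tgt : ℕ

/-- The register assignment obtained after taking transition `t` with current input
data value `d`, starting from the assignment `f`: each register gets the union of
the contents of the registers in its update set, together with `{d}` if the update
set contains `in`. -/
def RsATrans.apply {Sigma : Type} (t : RsATrans Sigma) (f : ℕ → Finset ℕ) (d : ℕ) :
    ℕ → Finset ℕ := fun r =>
  (t.upd r).biUnion fun o =>
    match o with
    | none => {d}
    | some r' => f r'

/-- A register set automaton (RsA); states and registers are drawn from `ℕ`. -/
structure RsA (Sigma : Type) where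
  Q : Finset ℕ
  R : Finset ℕ
  Δ : Set (RsATrans Sigma)
  I : Finset ℕ
  F : Finset ℕ
  finite_trans : Δ.Finite
  I_sub : I ⊆ Q
  F_sub : F ⊆ Q
  wf : ∀ t ∈ Δ, t.src ∈ Q ∧ t.tgt ∈ Q ∧ t.gIn ⊆ R ∧ t.gNin ⊆ R ∧
    Disjoint t.gIn t.gNin ∧ ∀ r ∈ R, ∀ r' : ℕ, some r' ∈ t.upd r → r' ∈ R

/-- One step of an RsA from configuration `c` to configuration `c'`, reading
the letter `x`. -/
def RsA.Step {Sigma : Type} (A : RsA Sigma) (c : ℕ × (ℕ → Finset ℕ)) (x : Sigma × ℕ)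
    (c' : ℕ × (ℕ → Finset ℕ)) : Prop :=
  ∃ t ∈ A.Δ, t.src = c.1 ∧ t.letter = x.1 ∧
    (∀ r ∈ t.gIn, x.2 ∈ c.2 r) ∧ (∀ r ∈ t.gNin, x.2 ∉ c.2 r) ∧
    c' = (t.tgt, t.apply c.2 x.2)

/-- `A.Run c w c'` holds iff `A` can read the data word `w` going from
configuration `c` to configuration `c'`. -/
inductive RsA.Run {Sigma : Type} (A : RsA Sigma) :
    (ℕ × (ℕ → Finset ℕ)) → DataWord Sigma → (ℕ × (ℕ → Finset ℕ)) → Prop where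
  | nil (c : ℕ × (ℕ → Finset ℕ)) : RsA.Run A c [] c
  | cons {c c' c'' : ℕ × (ℕ → Finset ℕ)} {x : Sigma × ℕ} {w : DataWord Sigma} :
      A.Step c x c' → RsA.Run A c' w c'' → RsA.Run A c (x :: w) c''

/-- The language of an RsA: words on which there exists an accepting run
starting from some initial state with all registers empty. -/
def RsA.Lang {Sigma : Type} (A : RsA Sigma) : Set (DataWord Sigma) :=
  { w | ∃ q₀ ∈ A.I, ∃ c : ℕ × (ℕ → Finset ℕ),
      A.Run (q₀, fun _ => ∅) w c ∧ c.1 ∈ A.F }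
/-- An RsA is deterministic (a DRsA) iff any two distinct transitions from the same
state over the same letter have incompatible guards. -/
def RsA.Deterministic {Sigma : Type} (A : RsA Sigma) : Prop :=
  ∀ t₁ ∈ A.Δ, ∀ t₂ ∈ A.Δ, t₁ ≠ t₂ → t₁.src = t₂.src → t₁.letter = t₂.letter →
    (t₁.gIn ∩ t₂.gNin).Nonempty ∨ (t₂.gIn ∩ t₁.gNin).Nonempty

/-!
A configuration of an automaton with register set `R` sorts the data values by the set of registers
containing them, so it tells apart at most `2 ^ #R` of them; transposing two values that it does not
tell apart in the rest of the input does not affect acceptance.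

Consider the words `0, 1, …, N - 1, g 0, …, g (N - 1)` with `N = 2 ^ n`. Using the binary expansions
of `0, …, N - 1` as register profiles, `n` registers suffice to check `g i = i` for every `i ≠ 0`;
the value `0` gets the empty profile, like the values that have not been read. One register suffices
to check `g 0 = 0`. Checking both requires telling apart `0, …, N - 1` and a further value, hence
`2 ^ n + 1` profiles.
-/

namespace RsA

variable {Sigma : Type}

section Run

variable {A : RsA Sigma} {c c' : ℕ × (ℕ → Finset ℕ)}

theorem run_nil_iff : A.Run c [] c' ↔ c' = c := by
  constructor
  · rintro ⟨⟩
    rfl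
  · rintro rfl
    exact .nil _

theorem run_cons_iff {x : Sigma × ℕ} {w : DataWord Sigma} :
    A.Run c (x :: w) c' ↔ ∃ c₁, A.Step c x c₁ ∧ A.Run c₁ w c' := by
  constructor
  · rintro (_ | ⟨hstep, hrun⟩)
    exact ⟨_, hstep, hrun⟩
  · rintro ⟨c₁, hstep, hrun⟩
    exact .cons hstep hrun

theorem run_singleton_iff {x : Sigma × ℕ} : A.Run c [x] c' ↔ A.Step c x c' := by
  simp only [run_cons_iff, run_nil_iff, exists_eq_right']

theorem run_append_iff {u v : DataWord Sigma} :
    A.Run c (u ++ v) c' ↔ ∃ c₁, A.Run c u c₁ ∧ A.Run c₁ v c' := by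
  induction u generalizing c with
  | nil => simp only [List.nil_append, run_nil_iff, exists_eq_left]
  | cons x u ih =>
    simp only [List.cons_append, run_cons_iff, ih]
    tauto

end Run

section Renaming

variable {A : RsA Sigma} {c c' c₁ : ℕ × (ℕ → Finset ℕ)} {σ : ℕ → ℕ}

/-- The configuration `c'` of `A` is obtained from `c` by renaming data values along `σ`. Only the
registers of `A` are compared, since assignments are defined on all of `ℕ`. -/
structure IsRenaming (A : RsA Sigma) (σ : ℕ → ℕ) (c c' : ℕ × (ℕ → Finset ℕ)) : Prop where
  state_eq : c'.1 = c.1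
  mem_iff : ∀ r ∈ A.R, ∀ d, σ d ∈ c'.2 r ↔ d ∈ c.2 r

theorem Step.exists_rename (hσ : σ.Injective) {x : Sigma × ℕ} (hstep : A.Step c x c₁)
    (hc : A.IsRenaming σ c c') :
    ∃ c₁', A.Step c' (Prod.map id σ x) c₁' ∧ A.IsRenaming σ c₁ c₁' := by
  obtain ⟨t, ht, hsrc, hletter, hIn, hNin, rfl⟩ := hstep
  obtain ⟨-, -, hInR, hNinR, -, hupd⟩ := A.wf t ht
  refine ⟨(t.tgt, t.apply c'.2 (σ x.2)), ⟨t, ht, hsrc.trans hc.state_eq.symm, hletter,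
    fun r hr => (hc.mem_iff r (hInR hr) _).2 (hIn r hr),
    fun r hr => (hc.mem_iff r (hNinR hr) _).not.2 (hNin r hr), rfl⟩, rfl, fun r hr d => ?_⟩
  simp only [RsATrans.apply, Finset.mem_biUnion]
  refine exists_congr fun o => and_congr_right fun ho => ?_
  cases o with
  | none => simp only [Finset.mem_singleton, hσ.eq_iff]
  | some r' => exact hc.mem_iff r' (hupd r hr r' ho) d

theorem Run.exists_rename (hσ : σ.Injective) {w : DataWord Sigma} (hrun : A.Run c w c₁)
    (hc : A.IsRenaming σ c c') :
    ∃ c₁', A.Run c' (w.map (Prod.map id σ)) c₁' ∧ A.IsRenaming σ c₁ c₁' := by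
  induction hrun generalizing c' with
  | nil => exact ⟨c', .nil _, hc⟩
  | cons hstep _ ih =>
    obtain ⟨c₂, hstep', hc₂⟩ := hstep.exists_rename hσ hc
    obtain ⟨c₃, hrun', hc₃⟩ := ih hc₂
    exact ⟨c₃, .cons hstep' hrun', hc₃⟩

end Renaming

section Profile

variable {A : RsA Sigma}

/-- The set of registers in `R` that contain the data value `d` under the assignment `f`. This is
all that the guards of a transition can observe about `d`. -/
def profile (R : Finset ℕ) (f : ℕ → Finset ℕ) (d : ℕ) : Finset ℕ :=
  {r ∈ R | d ∈ f r}

theorem isRenaming_swap_of_profile_eq {c : ℕ × (ℕ → Finset ℕ)} {i j : ℕ}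
    (h : profile A.R c.2 i = profile A.R c.2 j) : A.IsRenaming (Equiv.swap i j) c c := by
  refine ⟨rfl, fun r hr d => ?_⟩
  have hij : i ∈ c.2 r ↔ j ∈ c.2 r := by
    simpa only [profile, Finset.mem_filter, hr, true_and] using Finset.ext_iff.1 h r
  grind

theorem exists_profile_eq_of_two_pow_card_lt {R S : Finset ℕ} (f : ℕ → Finset ℕ)
    (h : 2 ^ R.card < S.card) : ∃ i ∈ S, ∃ j ∈ S, i ≠ j ∧ profile R f i = profile R f j :=
  Finset.exists_ne_map_eq_of_card_lt_of_maps_to (t := R.powerset)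
    (by rwa [Finset.card_powerset])
    fun _ _ => Finset.mem_powerset.2 (Finset.filter_subset _ _)

theorem exists_append_map_swap_mem_lang {u v : DataWord Sigma} (huv : u ++ v ∈ A.Lang)
    {S : Finset ℕ} (hS : 2 ^ A.R.card < S.card) :
    ∃ i ∈ S, ∃ j ∈ S, i ≠ j ∧ u ++ v.map (Prod.map id (Equiv.swap i j)) ∈ A.Lang := by
  obtain ⟨q₀, hq₀, c, hrun, hF⟩ := huv
  obtain ⟨c₁, hu, hv⟩ := run_append_iff.1 hrun
  obtain ⟨i, hi, j, hj, hij, hprofile⟩ := exists_profile_eq_of_two_pow_card_lt c₁.2 hS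
  obtain ⟨c', hv', hc'⟩ :=
    hv.exists_rename (Equiv.injective _) (isRenaming_swap_of_profile_eq hprofile)
  exact ⟨i, hi, j, hj, hij, q₀, hq₀, c', run_append_iff.2 ⟨c₁, hu, hv'⟩, hc'.state_eq ▸ hF⟩

end Profile

section InjectiveSource

variable {A : RsA Sigma}

theorem deterministic_of_injOn_src (hA : Set.InjOn RsATrans.src A.Δ) : A.Deterministic :=
  fun _ ht₁ _ ht₂ hne hsrc _ => absurd (hA ht₁ ht₂ hsrc) hne

theorem step_src_iff_of_injOn_src (hA : Set.InjOn RsATrans.src A.Δ) {t : RsATrans Sigma}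
    (ht : t ∈ A.Δ) {f : ℕ → Finset ℕ} {d : ℕ} {c' : ℕ × (ℕ → Finset ℕ)} :
    A.Step (t.src, f) (t.letter, d) c' ↔
      (∀ r ∈ t.gIn, d ∈ f r) ∧ (∀ r ∈ t.gNin, d ∉ f r) ∧ c' = (t.tgt, t.apply f d) := by
  constructor
  · rintro ⟨t', ht', hsrc, -, hstep⟩
    obtain rfl := hA ht' ht hsrc
    exact hstep
  · exact fun hstep => ⟨t, ht, rfl, rfl, hstep⟩

end InjectiveSource

section StoreCheck

variable (a : Sigma) (R : Finset ℕ) (N : ℕ) (code : ℕ → Finset ℕ)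

/-- The transition from state `i` to state `i + 1` that adds the current data value to the
registers in `code i`. -/
def storeTrans (i : ℕ) : RsATrans Sigma where
  src := i
  letter := a
  gIn := ∅
  gNin := ∅
  upd r := if r ∈ code i then {none, some r} else {some r}
  tgt := i + 1

/-- The transition from state `N + i` to state `N + i + 1` that checks that the current data value
has profile `R ∩ code i`. -/
def checkTrans (i : ℕ) : RsATrans Sigma where
  src := N + i
  letter := a
  gIn := R ∩ code i
  gNin := R \ code i
  upd r := {some r}
  tgt := N + i + 1

/-- The automaton that reads `2 * N` data values, adds the `i`-th of the first `N` to the registers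
in `code i`, and then checks that the `i`-th of the last `N` has profile `R ∩ code i`. States count
the letters read. -/
def storeCheck : RsA Sigma where
  Q := Finset.range (2 * N + 1)
  R := R
  Δ := storeTrans a code '' Set.Iio N ∪ checkTrans a R N code '' Set.Iio N
  I := {0}
  F := {2 * N}
  finite_trans := ((Set.finite_Iio N).image _).union ((Set.finite_Iio N).image _)
  I_sub := by simp
  F_sub := by simp
  wf := by
    rintro _ (⟨i, hi, rfl⟩ | ⟨i, hi, rfl⟩) <;> rw [Set.mem_Iio] at hi
    · refine ⟨?_, ?_, R.empty_subset, R.empty_subset, Finset.disjoint_empty_left _, ?_⟩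
      · simp only [storeTrans, Finset.mem_range]; omega
      · simp only [storeTrans, Finset.mem_range]; omega
      · grind [storeTrans]
    · refine ⟨?_, ?_, Finset.inter_subset_left, Finset.sdiff_subset,
        (Finset.disjoint_sdiff_inter R (code i)).symm, ?_⟩
      · simp only [checkTrans, Finset.mem_range]; omega
      · simp only [checkTrans, Finset.mem_range]; omega
      · grind [checkTrans]

/-- The data word `(a, g 0), …, (a, g (m - 1))`. -/
def block (g : ℕ → ℕ) (m : ℕ) : DataWord Sigma :=
  (List.range m).map fun i => (a, g i)

/-- The register assignment of `storeCheck` after reading the data values `0, …, m - 1`. -/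
def stored (m r : ℕ) : Finset ℕ :=
  {d ∈ Finset.range m | r ∈ code d}

variable {a R N code}

theorem block_succ (g : ℕ → ℕ) (m : ℕ) : block a g (m + 1) = block a g m ++ [(a, g m)] := by
  simp only [block, List.range_succ, List.map_append, List.map_cons, List.map_nil]

theorem map_block (σ g : ℕ → ℕ) (m : ℕ) :
    (block a g m).map (Prod.map id σ) = block a (σ ∘ g) m :=
  List.map_map

theorem profile_stored (m d : ℕ) :
    profile R (stored code m) d = if d < m then R ∩ code d else ∅ := by
  ext r
  by_cases hd : d < m <;> simp [profile, stored, hd]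

theorem profile_eq_inter_iff {f : ℕ → Finset ℕ} {d : ℕ} {s : Finset ℕ} :
    profile R f d = R ∩ s ↔ (∀ r ∈ R ∩ s, d ∈ f r) ∧ ∀ r ∈ R \ s, d ∉ f r := by
  simp only [profile, Finset.ext_iff, Finset.mem_filter, Finset.mem_inter, Finset.mem_sdiff]
  grind

theorem storeTrans_apply (i : ℕ) (f : ℕ → Finset ℕ) (d r : ℕ) :
    (storeTrans a code i).apply f d r = if r ∈ code i then insert d (f r) else f r := by
  simp only [RsATrans.apply, storeTrans]
  split_ifs
  · rw [Finset.biUnion_insert, Finset.singleton_biUnion, Finset.insert_eq]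
  · rw [Finset.singleton_biUnion]

theorem storeTrans_apply_stored (m : ℕ) :
    (storeTrans a code m).apply (stored code m) m = stored code (m + 1) := by
  ext r d
  rw [storeTrans_apply]
  split_ifs <;> grind [stored]

theorem checkTrans_apply (i : ℕ) (f : ℕ → Finset ℕ) (d : ℕ) :
    (checkTrans a R N code i).apply f d = f :=
  funext fun _ => Finset.singleton_biUnion

theorem injOn_src_storeCheck : Set.InjOn RsATrans.src (storeCheck a R N code).Δ := by
  rintro _ (⟨i, hi, rfl⟩ | ⟨i, hi, rfl⟩) _ (⟨j, hj, rfl⟩ | ⟨j, hj, rfl⟩) hsrc <;>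
    simp only [storeTrans, checkTrans, Set.mem_Iio] at hi hj hsrc
  · rw [hsrc]
  · omega
  · omega
  · rw [Nat.add_left_cancel hsrc]

theorem storeCheck_deterministic : (storeCheck a R N code).Deterministic :=
  deterministic_of_injOn_src injOn_src_storeCheck

theorem storeCheck_step_store_iff {i : ℕ} (hi : i < N) {f : ℕ → Finset ℕ} {d : ℕ}
    {c' : ℕ × (ℕ → Finset ℕ)} :
    (storeCheck a R N code).Step (i, f) (a, d) c' ↔
      c' = (i + 1, (storeTrans a code i).apply f d) := by
  have ht : storeTrans a code i ∈ (storeCheck a R N code).Δ := .inl ⟨i, hi, rfl⟩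
  simpa [storeTrans] using step_src_iff_of_injOn_src injOn_src_storeCheck ht

theorem storeCheck_step_check_iff {i : ℕ} (hi : i < N) {f : ℕ → Finset ℕ} {d : ℕ}
    {c' : ℕ × (ℕ → Finset ℕ)} :
    (storeCheck a R N code).Step (N + i, f) (a, d) c' ↔
      profile R f d = R ∩ code i ∧ c' = (N + (i + 1), f) := by
  have ht : checkTrans a R N code i ∈ (storeCheck a R N code).Δ := .inr ⟨i, hi, rfl⟩
  have hstep := step_src_iff_of_injOn_src injOn_src_storeCheck ht (f := f) (d := d) (c' := c')
  rw [checkTrans_apply] at hstep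
  rw [profile_eq_inter_iff, and_assoc]
  exact hstep

theorem storeCheck_run_store_iff {m : ℕ} (hm : m ≤ N) {c : ℕ × (ℕ → Finset ℕ)} :
    (storeCheck a R N code).Run (0, fun _ => ∅) (block a id m) c ↔ c = (m, stored code m) := by
  induction m generalizing c with
  | zero => exact run_nil_iff
  | succ m ih =>
    simp only [block_succ, run_append_iff, ih (Nat.le_of_succ_le hm), exists_eq_left,
      run_singleton_iff, storeCheck_step_store_iff hm, id_eq, storeTrans_apply_stored]

theorem storeCheck_run_check_iff {f : ℕ → Finset ℕ} {g : ℕ → ℕ} {m : ℕ} (hm : m ≤ N)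
    {c : ℕ × (ℕ → Finset ℕ)} :
    (storeCheck a R N code).Run (N, f) (block a g m) c ↔
      (∀ i < m, profile R f (g i) = R ∩ code i) ∧ c = (N + m, f) := by
  induction m generalizing c with
  | zero => simpa [block] using run_nil_iff
  | succ m ih =>
    simp only [block_succ, run_append_iff, ih (Nat.le_of_succ_le hm), and_assoc, exists_and_left,
      exists_eq_left, run_singleton_iff, storeCheck_step_check_iff hm, Nat.forall_lt_succ_right]

theorem block_id_append_block_mem_lang_storeCheck_iff {g : ℕ → ℕ} :
    block a id N ++ block a g N ∈ (storeCheck a R N code).Lang ↔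
      ∀ i < N, (if g i < N then R ∩ code (g i) else ∅) = R ∩ code i := by
  have hrun (c) : (storeCheck a R N code).Run (0, fun _ => ∅) (block a id N ++ block a g N) c ↔
      (∀ i < N, profile R (stored code N) (g i) = R ∩ code i) ∧ c = (N + N, stored code N) := by
    simp only [run_append_iff, storeCheck_run_store_iff le_rfl, exists_eq_left,
      storeCheck_run_check_iff le_rfl]
  have hI : (storeCheck a R N code).I = {0} := rfl
  have hF : N + N ∈ (storeCheck a R N code).F := Finset.mem_singleton.2 (two_mul N).symm
  simp [Lang, hI, hF, hrun, profile_stored]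

theorem block_id_append_block_id_mem_lang_storeCheck :
    block a id N ++ block a id N ∈ (storeCheck a R N code).Lang :=
  block_id_append_block_mem_lang_storeCheck_iff.2 fun _ hi => if_pos hi

theorem apply_eq_self_of_mem_lang_storeCheck {g : ℕ → ℕ}
    (hg : block a id N ++ block a g N ∈ (storeCheck a R N code).Lang) {i : ℕ} (hi : i < N)
    (hne : (R ∩ code i).Nonempty) (hinj : ∀ j < N, R ∩ code j = R ∩ code i → j = i) :
    g i = i := by
  have hcode := block_id_append_block_mem_lang_storeCheck_iff.1 hg i hi
  split_ifs at hcode with hgi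
  · exact hinj _ hgi hcode
  · exact absurd hcode.symm hne.ne_empty

end StoreCheck

section Witnesses

variable {a : Sigma} {n : ℕ} {g : ℕ → ℕ}

/-- The automaton with `n` registers that tells apart the values below `2 ^ n` by their binary
expansions. -/
def binaryCheck (a : Sigma) (n : ℕ) : RsA Sigma :=
  storeCheck a (Finset.range n) (2 ^ n) Finset.equivBitIndices

/-- The automaton with one register that tells apart `0` from all other values; only the value `0`
is added to its register `0`. -/
def zeroCheck (a : Sigma) (N : ℕ) : RsA Sigma :=
  storeCheck a {0} N fun i => {i}

theorem range_inter_equivBitIndices {i : ℕ} (hi : i < 2 ^ n) :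
    Finset.range n ∩ Finset.equivBitIndices i = Finset.equivBitIndices i := by
  refine Finset.inter_eq_right.2 fun r hr => Finset.mem_range.2 ?_
  have hri : 2 ^ r ≤ i := Nat.two_pow_le_of_mem_bitIndices (List.mem_toFinset.1 hr)
  exact (Nat.pow_lt_pow_iff_right Nat.one_lt_two).1 (hri.trans_lt hi)

theorem apply_eq_self_of_mem_lang_binaryCheck
    (hg : block a id (2 ^ n) ++ block a g (2 ^ n) ∈ (binaryCheck a n).Lang)
    {i : ℕ} (hi : i < 2 ^ n) (hi₀ : i ≠ 0) : g i = i := by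
  refine apply_eq_self_of_mem_lang_storeCheck hg hi ?_ fun j hj hji => ?_
  · rw [range_inter_equivBitIndices hi, Finset.nonempty_iff_ne_empty]
    exact fun h => hi₀ (Finset.equivBitIndices.injective (by simpa using h))
  · rw [range_inter_equivBitIndices hi, range_inter_equivBitIndices hj] at hji
    exact Finset.equivBitIndices.injective hji

theorem apply_zero_of_mem_lang_zeroCheck {N : ℕ} (hN : 0 < N)
    (hg : block a id N ++ block a g N ∈ (zeroCheck a N).Lang) : g 0 = 0 := by
  refine apply_eq_self_of_mem_lang_storeCheck hg hN (by simp) fun j _ hj => ?_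
  simpa [Finset.ext_iff, eq_comm] using hj

theorem lang_ne_binaryCheck_inter_zeroCheck {A : RsA Sigma} (hA : A.R.card ≤ n) :
    A.Lang ≠ (binaryCheck a n).Lang ∩ (zeroCheck a (2 ^ n)).Lang := by
  intro hL
  have hid : block a id (2 ^ n) ++ block a id (2 ^ n) ∈ A.Lang :=
    hL ▸ ⟨block_id_append_block_id_mem_lang_storeCheck,
      block_id_append_block_id_mem_lang_storeCheck⟩
  have hcard : 2 ^ A.R.card < (Finset.range (2 ^ n + 1)).card := by
    rw [Finset.card_range, Nat.lt_succ_iff]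
    exact Nat.pow_le_pow_right Nat.two_pos hA
  obtain ⟨i, hi, j, hj, hij, hswap⟩ := exists_append_map_swap_mem_lang hid hcard
  rw [map_block, Function.comp_id, hL] at hswap
  have hfix : ∀ k < 2 ^ n, Equiv.swap i j k = k := by
    intro k hk
    rcases eq_or_ne k 0 with rfl | hk₀
    · exact apply_zero_of_mem_lang_zeroCheck hk hswap.2
    · exact apply_eq_self_of_mem_lang_binaryCheck hswap.1 hk hk₀
  have hlt : i < 2 ^ n ∨ j < 2 ^ n := by
    rw [Finset.mem_range] at hi hj
    omega
  rcases hlt with hi | hj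
  · exact hij (by simpa using (hfix i hi).symm)
  · exact hij (by simpa using hfix j hj)

end Witnesses

end RsA

theorem drsa_n_not_closed_under_intersection_general (Sigma : Type) [Nonempty Sigma] (n : ℕ) :
    ∃ A₁ A₂ : RsA Sigma, (A₁.Deterministic ∧ A₁.R.card ≤ n) ∧
      (A₂.Deterministic ∧ A₂.R.card ≤ 1) ∧
      ∀ A : RsA Sigma, A.R.card ≤ n → A.Lang ≠ A₁.Lang ∩ A₂.Lang := by
  obtain ⟨a⟩ := ‹Nonempty Sigma›
  exact ⟨RsA.binaryCheck a n, RsA.zeroCheck a (2 ^ n),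
    ⟨RsA.storeCheck_deterministic, (Finset.card_range n).le⟩,
    ⟨RsA.storeCheck_deterministic, (Finset.card_singleton 0).le⟩,
    fun _ => RsA.lang_ne_binaryCheck_inter_zeroCheck⟩

/-- For each `n ≥ 1`, the class of languages of DRsAs with at most
`n` registers is not closed under intersection. -/
theorem drsa_n_not_closed_under_intersection (Sigma : Type) [Fintype Sigma]
    [Nonempty Sigma] (n : ℕ) (hn : 1 ≤ n) :
    ∃ L₁ L₂ : Set (DataWord Sigma),
      (∃ A₁ : RsA Sigma, A₁.Deterministic ∧ A₁.R.card ≤ n ∧ RsA.Lang A₁ = L₁) ∧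
      (∃ A₂ : RsA Sigma, A₂.Deterministic ∧ A₂.R.card ≤ n ∧ RsA.Lang A₂ = L₂) ∧
      ¬ ∃ A : RsA Sigma, A.Deterministic ∧ A.R.card ≤ n ∧ RsA.Lang A = L₁ ∩ L₂ := by
  obtain ⟨A₁, A₂, ⟨hdet₁, hcard₁⟩, ⟨hdet₂, hcard₂⟩, hne⟩ :=
    drsa_n_not_closed_under_intersection_general Sigma n
  exact ⟨A₁.Lang, A₂.Lang, ⟨A₁, hdet₁, hcard₁, rfl⟩, ⟨A₂, hdet₂, hcard₂.trans hn, rfl⟩,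
    fun ⟨A, _, hcard, hL⟩ => hne A hcard hL⟩
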